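/- arXiv:1812.07629 — 2 statements merged into one kernel-verified Lean document; each statement's English description precedes it below -/
import Mathlib

section
/- Let Ω ⊆ ℝ^d be open, let E and F be finite-dimensional real inner product spaces, and let P_0, P_1, …, P_d : E → F be linear maps. Suppose μ is an E-valued Radon measure on Ω with polar decomposition μ = g|μ| (|g(x)| = 1 for |μ|-a.e. x) satisfying P(D)μ = 0 in the sense of distributions. Then for every real κ with 0 ≤ κ < ℓ_P, the total variation measure |μ| is absolutely continuous with respect to the κ-dimensional Hausdorff measure H^κ; in particular the Hausdorff dimension of |μ| is at least ℓ_P. -/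
/-!
The proof is a monotonicity formula for `ν = |μ|`. Fix a Lebesgue point `x` of `g` with respect to
`ν` (these have full measure by the Besicovitch covering theorem) and put `e = g x`, which has unit
norm. Up to an error coming from the oscillation of `g` near `x` and from `P₀`, the equation says
that `∑ᵢ Pᵢ e ∂ᵢ ν = 0`, so `ν` is infinitesimally invariant along `W = (kerSymb P e)ᗮ`, a space of
dimension `m ≥ ℓ_P`. There is a linear map `L` such that testing with
`φ(y) = ψ(1 - s |y - x|²) L(y - x)` amounts to testing with the vector field
`ψ(1 - s |y - x|²) π_W(y - x)` (`exists_symbol_inverse`). As `tr π_W = m` and `|π_W v| ≤ |v|`, this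
gives `m B(s) ≤ -2 s B'(s) + error` for `B(s) = ∫ ψ(1 - s |y - x|²) dν` (`first_variation_le`).

No doubling property of `ν` is available, so the error has to be absorbed in the two main terms.
It is at most a small multiple of the integral of a weight `3 ψ + 2 t ψ'` that is radially
nonincreasing; the superlevel sets of this weight are balls around `x`, so the Lebesgue point
property on balls passes to the weight (`integral_mul_radWeight_le`), and the integral of the weight
is exactly `3 B - 2 s B'`. Hence `κ B ≤ -2 s B'` for large `s` whenever `κ < ℓ_P`, and integrating
gives `ν(B(x, r)) = O(r^κ)` (`ball_decay`, `ae_ball_decay`). The mass distribution principle then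
yields `ν ≪ μH[κ]` (`null_of_ball_decay`).
-/

open MeasureTheory Metric Filter
open scoped ENNReal RealInnerProductSpace Topology

/-- The set `{ξ ∈ ℝ^d : P(ξ)e = 0}`, where `P(ξ) = ∑ᵢ ξᵢ Pᵢ` is the principal symbol of the
first-order operator with coefficients `P i`; it is a linear subspace of `ℝ^d`. -/
noncomputable def kerSymb {d : ℕ} {E F : Type*} [NormedAddCommGroup E] [InnerProductSpace ℝ E]
    [NormedAddCommGroup F] [InnerProductSpace ℝ F] (P : Fin d → E →ₗ[ℝ] F) (e : E) :
    Submodule ℝ (EuclideanSpace ℝ (Fin d)) where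
  carrier := {ξ | ∑ i, ξ i • P i e = 0}
  zero_mem' := by simp
  add_mem' {x y} hx hy := by
    simp only [Set.mem_setOf_eq] at hx hy ⊢
    have : ∑ i, (x + y) i • P i e = (∑ i, x i • P i e) + ∑ i, y i • P i e := by
      rw [← Finset.sum_add_distrib]
      exact Finset.sum_congr rfl fun i _ => by simp [PiLp.add_apply, add_smul]
    rw [this, hx, hy, add_zero]
  smul_mem' c x hx := by
    simp only [Set.mem_setOf_eq] at hx ⊢
    have : ∑ i, (c • x) i • P i e = c • ∑ i, x i • P i e := by
      rw [Finset.smul_sum]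
      exact Finset.sum_congr rfl fun i _ => by simp [PiLp.smul_apply, smul_smul]
    rw [this, hx, smul_zero]

/-- `ℓ_P`, the minimal dimension of `{ξ : P(ξ)e = 0}ᗮ` over nonzero `e ∈ E`. -/
noncomputable def ellP {d : ℕ} {E F : Type*} [NormedAddCommGroup E] [InnerProductSpace ℝ E]
    [NormedAddCommGroup F] [InnerProductSpace ℝ F] (P : Fin d → E →ₗ[ℝ] F) : ℕ :=
  sInf {n : ℕ | ∃ e : E, e ≠ 0 ∧ Module.finrank ℝ ((kerSymb P e)ᗮ) = n}

/-- `P(D)μ = 0` in the sense of distributions on `Ω`, for the `E`-valued measure `μ = g ν`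
(`ν = |μ|`, `g` the polar): for every smooth compactly supported test function `φ : Ω → F`,
`∑ᵢ ∫ ⟪Pᵢ(g x), ∂ᵢφ x⟫ dν = ∫ ⟪P₀(g x), φ x⟫ dν`. -/
def SolvesPDE {d : ℕ} {E F : Type*} [NormedAddCommGroup E] [InnerProductSpace ℝ E]
    [NormedAddCommGroup F] [InnerProductSpace ℝ F]
    (Ω : Set (EuclideanSpace ℝ (Fin d))) (P₀ : E →ₗ[ℝ] F) (P : Fin d → E →ₗ[ℝ] F)
    (ν : Measure (EuclideanSpace ℝ (Fin d))) (g : EuclideanSpace ℝ (Fin d) → E) : Prop :=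
  ∀ φ : EuclideanSpace ℝ (Fin d) → F, ContDiff ℝ (⊤ : ℕ∞) φ → HasCompactSupport φ → tsupport φ ⊆ Ω →
    (∑ i : Fin d, ∫ x, ⟪P i (g x), fderiv ℝ φ x (EuclideanSpace.single i 1)⟫ ∂ν)
      = ∫ x, ⟪P₀ (g x), φ x⟫ ∂ν

/-! ### The radial profile -/

/-- The derivative `u ↦ u⁻² e^{-1/u}` of the profile `expNegInvGlue` (extended by `0` to `u ≤ 0`). -/
noncomputable def profDeriv (u : ℝ) : ℝ := u⁻¹ ^ 2 * expNegInvGlue u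

/-- The weight `3 ψ(1 - t) + 2 t ψ'(1 - t)`, with `ψ = expNegInvGlue`, evaluated at
`t = s |y - x|²`. It dominates both terms of the gradient of the test fields, and the coefficient
`3` is large enough for it to be nonincreasing in `t`. -/
noncomputable def radWeight (t : ℝ) : ℝ := 3 * expNegInvGlue (1 - t) + 2 * t * profDeriv (1 - t)

lemma hasDerivAt_prof (u : ℝ) : HasDerivAt expNegInvGlue (profDeriv u) u := by
  have := expNegInvGlue.hasDerivAt_polynomial_eval_inv_mul 1 u
  simpa [profDeriv] using this

lemma continuous_prof : Continuous expNegInvGlue :=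
  (expNegInvGlue.contDiff (n := 0)).continuous

lemma continuous_profDeriv : Continuous profDeriv := by
  have := expNegInvGlue.continuous_polynomial_eval_inv_mul (Polynomial.X ^ 2)
  simp only [Polynomial.eval_pow, Polynomial.eval_X] at this
  exact this

lemma profDeriv_nonneg (u : ℝ) : 0 ≤ profDeriv u :=
  mul_nonneg (sq_nonneg _) (expNegInvGlue.nonneg u)

lemma radWeight_antitone : Antitone radWeight := by
  let p : Polynomial ℝ := 2 * Polynomial.X ^ 2 - 2 * Polynomial.X + 3
  have hmono : Monotone fun u : ℝ => p.eval u⁻¹ * expNegInvGlue u := by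
    refine monotone_of_deriv_nonneg
      (expNegInvGlue.differentiable_polynomial_eval_inv_mul p) fun u => ?_
    rw [(expNegInvGlue.hasDerivAt_polynomial_eval_inv_mul p u).deriv]
    refine mul_nonneg ?_ (expNegInvGlue.nonneg u)
    simp only [p, Polynomial.eval_mul, Polynomial.eval_pow, Polynomial.eval_X, Polynomial.eval_sub,
      Polynomial.eval_add, Polynomial.derivative_sub, Polynomial.derivative_add,
      Polynomial.derivative_mul, Polynomial.derivative_X_pow, Polynomial.derivative_X,
      Polynomial.derivative_ofNat, Polynomial.eval_ofNat]
    simp [-inv_pow]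
    refine mul_nonneg (sq_nonneg _) ?_
    nlinarith [sq_nonneg (2 * u⁻¹ - 3)]
  intro a b hab
  have hrw : ∀ t, radWeight t = p.eval (1 - t)⁻¹ * expNegInvGlue (1 - t) := by
    intro t
    have h : (t : ℝ) * (1 - t)⁻¹ ^ 2 = (1 - t)⁻¹ ^ 2 - (1 - t)⁻¹ := by
      rcases eq_or_ne (1 - t) 0 with h | h
      · simp [h]
      · field_simp
        ring
    simp only [radWeight, profDeriv, p]
    simp [-inv_pow]
    linear_combination 2 * expNegInvGlue (1 - t) * h
  rw [hrw, hrw]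
  exact hmono (by linarith)

lemma continuous_radWeight : Continuous radWeight := by
  have h1 := continuous_prof
  have h2 := continuous_profDeriv
  unfold radWeight
  fun_prop

lemma prof_eq_zero {t : ℝ} (ht : 1 ≤ t) : expNegInvGlue (1 - t) = 0 :=
  expNegInvGlue.zero_of_nonpos (by linarith)

lemma profDeriv_eq_zero {t : ℝ} (ht : 1 ≤ t) : profDeriv (1 - t) = 0 := by
  simp [profDeriv, prof_eq_zero ht]

lemma radWeight_eq_zero {t : ℝ} (ht : 1 ≤ t) : radWeight t = 0 := by
  simp [radWeight, prof_eq_zero ht, profDeriv_eq_zero ht]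

lemma radWeight_nonneg (t : ℝ) : 0 ≤ radWeight t := by
  rw [← radWeight_eq_zero (le_max_left 1 t)]
  exact radWeight_antitone (le_max_right 1 t)

lemma radWeight_le {t : ℝ} (ht : 0 ≤ t) : radWeight t ≤ radWeight 0 :=
  radWeight_antitone ht

lemma prof_le_radWeight {t : ℝ} (ht : 0 ≤ t) : expNegInvGlue (1 - t) ≤ radWeight t := by
  have := mul_nonneg ht (profDeriv_nonneg (1 - t))
  have := expNegInvGlue.nonneg (1 - t)
  unfold radWeight; linarith

lemma profDeriv_le_radWeight (t : ℝ) : 2 * t * profDeriv (1 - t) ≤ radWeight t := by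
  have := expNegInvGlue.nonneg (1 - t)
  unfold radWeight; linarith

/-! ### Comparing measures on balls and against radial weights -/

/-- If `μ₁ ≤ μ₂` on all closed balls centred at `x` of radius at most `R`, then the same holds
against nonincreasing radial weights supported in `closedBall x R`, because their superlevel sets
are such balls (layer cake formula). -/
lemma lintegral_radWeight_mono {V : Type*} [NormedAddCommGroup V] [ProperSpace V]
    [MeasurableSpace V] [BorelSpace V] {μ₁ μ₂ : Measure V} {x : V} {R s : ℝ} (hR : 0 < R)
    (hs : 1 ≤ s * R ^ 2)
    (h : ∀ r, 0 ≤ r → r ≤ R → μ₁ (closedBall x r) ≤ μ₂ (closedBall x r)) :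
    ∫⁻ y, ENNReal.ofReal (radWeight (s * ‖y - x‖ ^ 2)) ∂μ₁
      ≤ ∫⁻ y, ENNReal.ofReal (radWeight (s * ‖y - x‖ ^ 2)) ∂μ₂ := by
  have hs0 : 0 < s := by
    by_contra hcon
    nlinarith [sq_nonneg R]
  have hcont : Continuous fun y : V => radWeight (s * ‖y - x‖ ^ 2) :=
    continuous_radWeight.comp (by fun_prop)
  rw [lintegral_eq_lintegral_meas_le μ₁ (Eventually.of_forall fun y => radWeight_nonneg _)
      hcont.aemeasurable,
    lintegral_eq_lintegral_meas_le μ₂ (Eventually.of_forall fun y => radWeight_nonneg _)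
      hcont.aemeasurable]
  refine setLIntegral_mono' measurableSet_Ioi fun t ht => ?_
  rcases Set.eq_empty_or_nonempty {y : V | t ≤ radWeight (s * ‖y - x‖ ^ 2)} with he | hne
  · simp [he]
  have hsub : {y : V | t ≤ radWeight (s * ‖y - x‖ ^ 2)} ⊆ closedBall x R := by
    intro y hy
    by_contra hcon
    rw [mem_closedBall, dist_eq_norm, not_le] at hcon
    have h1 : 1 ≤ s * ‖y - x‖ ^ 2 := hs.trans (by gcongr)
    have h2 : t ≤ radWeight (s * ‖y - x‖ ^ 2) := hy
    rw [radWeight_eq_zero h1] at h2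
    exact absurd h2 (not_le.2 ht)
  have hcomp : IsCompact {y : V | t ≤ radWeight (s * ‖y - x‖ ^ 2)} :=
    (isCompact_closedBall x R).of_isClosed_subset (isClosed_le continuous_const hcont) hsub
  obtain ⟨y₀, hy₀, hmax⟩ := hcomp.exists_isMaxOn hne
    (f := fun y => ‖y - x‖) (by fun_prop)
  have heq : {y : V | t ≤ radWeight (s * ‖y - x‖ ^ 2)} = closedBall x ‖y₀ - x‖ := by
    ext y
    rw [mem_closedBall, dist_eq_norm]
    refine ⟨fun hy => hmax hy, fun hy => le_trans hy₀ (radWeight_antitone ?_)⟩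
    gcongr
  rw [heq]
  exact h _ (norm_nonneg _) (by simpa [dist_eq_norm] using hsub hy₀)

/-- A small mean of `h` on all small balls around `x` yields a small weighted mean. -/
lemma integral_mul_radWeight_le {V : Type*} [NormedAddCommGroup V] [ProperSpace V]
    [MeasurableSpace V] [BorelSpace V] {ν : Measure V} [IsFiniteMeasure ν] {x : V} {R s δ : ℝ}
    (hR : 0 < R) (hs : 1 ≤ s * R ^ 2) (hδ : 0 ≤ δ) {h : V → ℝ} (h0 : ∀ y, 0 ≤ h y)
    (hint : Integrable h ν)
    (hball : ∀ r, 0 ≤ r → r ≤ R → ∫ y in closedBall x r, h y ∂ν ≤ δ * ν.real (closedBall x r)) :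
    ∫ y, h y * radWeight (s * ‖y - x‖ ^ 2) ∂ν ≤ δ * ∫ y, radWeight (s * ‖y - x‖ ^ 2) ∂ν := by
  have hs0 : 0 < s := by
    by_contra hcon
    nlinarith [sq_nonneg R]
  have hcont : Continuous fun y : V => radWeight (s * ‖y - x‖ ^ 2) :=
    continuous_radWeight.comp (by fun_prop)
  have hw : Integrable (fun y : V => radWeight (s * ‖y - x‖ ^ 2)) ν := by
    refine Integrable.of_bound hcont.aestronglyMeasurable (radWeight 0)
      (Eventually.of_forall fun y => ?_)
    rw [Real.norm_of_nonneg (radWeight_nonneg _)]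
    exact radWeight_le (by positivity)
  have key := lintegral_radWeight_mono (μ₁ := ν.withDensity fun y => ENNReal.ofReal (h y))
    (μ₂ := ENNReal.ofReal δ • ν) (x := x) hR hs ?_
  · have hm : AEMeasurable (fun y => ENNReal.ofReal (h y)) ν :=
      hint.aemeasurable.ennreal_ofReal
    rw [lintegral_withDensity_eq_lintegral_mul₀ hm hcont.aemeasurable.ennreal_ofReal,
      lintegral_smul_measure] at key
    rw [integral_eq_lintegral_of_nonneg_ae
        (Eventually.of_forall fun y => mul_nonneg (h0 y) (radWeight_nonneg _))
        (hint.aestronglyMeasurable.mul hcont.aestronglyMeasurable),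
      integral_eq_lintegral_of_nonneg_ae
        (Eventually.of_forall fun y => radWeight_nonneg _) hcont.aestronglyMeasurable]
    have hfin : ∫⁻ y, ENNReal.ofReal (radWeight (s * ‖y - x‖ ^ 2)) ∂ν ≠ ⊤ :=
      (hasFiniteIntegral_iff_ofReal (Eventually.of_forall fun y => radWeight_nonneg _)).1
        hw.hasFiniteIntegral |>.ne
    have h2 := ENNReal.toReal_mono (ENNReal.mul_ne_top ENNReal.ofReal_ne_top hfin) key
    rw [ENNReal.toReal_mul, ENNReal.toReal_ofReal hδ] at h2
    refine le_trans (le_of_eq ?_) h2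
    congr 1
    refine lintegral_congr fun y => ?_
    rw [ENNReal.ofReal_mul (h0 y)]
    rfl
  · intro r hr hrR
    have h1 := hball r hr hrR
    rw [withDensity_apply _ measurableSet_closedBall, Measure.smul_apply, smul_eq_mul,
      ← ofReal_integral_eq_lintegral_ofReal hint.integrableOn (Eventually.of_forall h0),
      ← ofReal_measureReal (measure_ne_top _ _), ← ENNReal.ofReal_mul hδ]
    exact ENNReal.ofReal_le_ofReal h1

/-! ### Decay of ball measures from a differential inequality -/

lemma integrable_prof {V : Type*} [NormedAddCommGroup V] [MeasurableSpace V] [BorelSpace V]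
    (ν : Measure V) [IsFiniteMeasure ν] (x : V) {s : ℝ} (hs : 0 ≤ s) :
    Integrable (fun y => expNegInvGlue (1 - s * ‖y - x‖ ^ 2)) ν := by
  have hcont : Continuous fun y : V => expNegInvGlue (1 - s * ‖y - x‖ ^ 2) :=
    continuous_prof.comp (by fun_prop)
  refine Integrable.of_bound hcont.measurable.aestronglyMeasurable (radWeight 0)
    (Eventually.of_forall fun y => ?_)
  have ht : 0 ≤ s * ‖y - x‖ ^ 2 := by positivity
  rw [Real.norm_of_nonneg (expNegInvGlue.nonneg _)]
  exact (prof_le_radWeight ht).trans (radWeight_le ht)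

lemma integrable_radWeight {V : Type*} [NormedAddCommGroup V] [MeasurableSpace V] [BorelSpace V]
    (ν : Measure V) [IsFiniteMeasure ν] (x : V) {s : ℝ} (hs : 0 ≤ s) :
    Integrable (fun y => radWeight (s * ‖y - x‖ ^ 2)) ν := by
  have hcont : Continuous fun y : V => radWeight (s * ‖y - x‖ ^ 2) :=
    continuous_radWeight.comp (by fun_prop)
  refine Integrable.of_bound hcont.measurable.aestronglyMeasurable (radWeight 0)
    (Eventually.of_forall fun y => ?_)
  rw [Real.norm_of_nonneg (radWeight_nonneg _)]
  exact radWeight_le (by positivity)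

lemma integrable_profDeriv {V : Type*} [NormedAddCommGroup V] [MeasurableSpace V] [BorelSpace V]
    (ν : Measure V) [IsFiniteMeasure ν] (x : V) {s : ℝ} (hs : 0 ≤ s) :
    Integrable (fun y => 2 * (s * ‖y - x‖ ^ 2) * profDeriv (1 - s * ‖y - x‖ ^ 2)) ν := by
  have h := (integrable_radWeight ν x hs).sub ((integrable_prof ν x hs).const_mul 3)
  refine h.congr (Eventually.of_forall fun y => ?_)
  simp only [Pi.sub_apply, radWeight]
  ring

lemma hasDerivAt_integral_prof {V : Type*} [NormedAddCommGroup V] [MeasurableSpace V]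
    [BorelSpace V] (ν : Measure V) [IsFiniteMeasure ν] (x : V) {s : ℝ} (hs : 0 < s) :
    HasDerivAt (fun σ => ∫ y, expNegInvGlue (1 - σ * ‖y - x‖ ^ 2) ∂ν)
      (∫ y, -(‖y - x‖ ^ 2 * profDeriv (1 - s * ‖y - x‖ ^ 2)) ∂ν) s := by
  have hq := continuous_profDeriv
  have hp := continuous_prof
  refine (hasDerivAt_integral_of_dominated_loc_of_deriv_le
    (F := fun σ y => expNegInvGlue (1 - σ * ‖y - x‖ ^ 2))
    (F' := fun σ y => -(‖y - x‖ ^ 2 * profDeriv (1 - σ * ‖y - x‖ ^ 2)))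
    (bound := fun _ => radWeight 0 / s) (Ioi_mem_nhds (half_lt_self hs))
    (Eventually.of_forall fun σ => ?_) (integrable_prof ν x hs.le) ?_
    (Eventually.of_forall fun y σ hσ => ?_) (integrable_const _)
    (Eventually.of_forall fun y σ _ => ?_)).2
  · exact Measurable.aestronglyMeasurable (Continuous.measurable (by fun_prop))
  · exact Measurable.aestronglyMeasurable (Continuous.measurable (by fun_prop))
  · have hσ' : s / 2 < σ := hσ
    have hσ0 : 0 < σ := by linarith
    have hk := mul_nonneg (sq_nonneg ‖y - x‖) (profDeriv_nonneg (1 - σ * ‖y - x‖ ^ 2))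
    rw [norm_neg, Real.norm_of_nonneg hk, le_div_iff₀ hs]
    have h1 := (profDeriv_le_radWeight (σ * ‖y - x‖ ^ 2)).trans (radWeight_le (by positivity))
    nlinarith
  · have h1 : HasDerivAt (fun τ : ℝ => 1 - τ * ‖y - x‖ ^ 2) (-(‖y - x‖ ^ 2)) σ := by
      simpa using ((hasDerivAt_id σ).mul_const (‖y - x‖ ^ 2)).const_sub 1
    have h2 := (hasDerivAt_prof (1 - σ * ‖y - x‖ ^ 2)).comp σ h1
    refine h2.congr_deriv ?_
    ring

/-- Integrating `κ B ≤ -2 s B'` for `B(s) = ∫ ψ(1 - s |y - x|²) dν` shows that `s^{κ/2} B(s)` is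
nonincreasing, hence the measure of a ball of radius `r = (2s)^{-1/2}` is `O(r^κ)`. -/
lemma ball_decay {V : Type*} [NormedAddCommGroup V] [MeasurableSpace V]
    [BorelSpace V] (ν : Measure V) [IsFiniteMeasure ν] (x : V) {κ s₀ : ℝ} (hs₀ : 0 < s₀)
    (h : ∀ s, s₀ ≤ s → κ * ∫ y, expNegInvGlue (1 - s * ‖y - x‖ ^ 2) ∂ν
      ≤ ∫ y, 2 * (s * ‖y - x‖ ^ 2) * profDeriv (1 - s * ‖y - x‖ ^ 2) ∂ν) :
    ∃ C r₀ : ℝ, 0 < r₀ ∧ ∀ r, 0 < r → r ≤ r₀ → ν.real (closedBall x r) ≤ C * r ^ κ := by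
  set B : ℝ → ℝ := fun σ => ∫ y, expNegInvGlue (1 - σ * ‖y - x‖ ^ 2) ∂ν with hB
  set B' : ℝ → ℝ := fun σ => ∫ y, -(‖y - x‖ ^ 2 * profDeriv (1 - σ * ‖y - x‖ ^ 2)) ∂ν with hB'
  have hder : ∀ s, 0 < s → HasDerivAt (fun σ => B σ * σ ^ (κ / 2))
      (B' s * s ^ (κ / 2) + B s * (κ / 2 * s ^ (κ / 2 - 1))) s := fun s hs =>
    (hasDerivAt_integral_prof ν x hs).mul (Real.hasDerivAt_rpow_const (Or.inl hs.ne'))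
  have hanti : AntitoneOn (fun σ => B σ * σ ^ (κ / 2)) (Set.Ici s₀) := by
    refine antitoneOn_of_deriv_nonpos (convex_Ici _) (fun s hs => ?_) (fun s hs => ?_)
      (fun s hs => ?_)
    · exact (hder s (hs₀.trans_le hs)).continuousAt.continuousWithinAt
    · rw [interior_Ici] at hs
      exact (hder s (hs₀.trans hs)).differentiableAt.differentiableWithinAt
    · rw [interior_Ici] at hs
      have hs0 : 0 < s := hs₀.trans hs
      rw [(hder s hs0).deriv]
      have h1 : ∫ y, 2 * (s * ‖y - x‖ ^ 2) * profDeriv (1 - s * ‖y - x‖ ^ 2) ∂ν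
          = -(2 * s) * B' s := by
        rw [hB', ← integral_const_mul]
        congr 1
        ext y
        ring
      have h2 := h s (le_of_lt hs)
      rw [h1] at h2
      have h3 : s ^ (κ / 2) = s * s ^ (κ / 2 - 1) := by
        rw [Real.rpow_sub_one hs0.ne']
        field_simp
      have h4 : 0 < s ^ (κ / 2 - 1) := Real.rpow_pos_of_pos hs0 _
      rw [h3]
      have h5 : 0 ≤ s ^ (κ / 2 - 1) * (-(2 * s) * B' s - κ * B s) :=
        mul_nonneg h4.le (sub_nonneg.2 h2)
      nlinarith
  have hψ : 0 < expNegInvGlue (1 / 2) := expNegInvGlue.pos_of_pos (by norm_num)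
  refine ⟨B s₀ * s₀ ^ (κ / 2) * 2 ^ (κ / 2) / expNegInvGlue (1 / 2), (√(2 * s₀))⁻¹,
    by positivity, fun r hr hr₀ => ?_⟩
  -- the scale at which the profile equals `ψ(1/2)` on the sphere of radius `r`
  set s : ℝ := (2 * r ^ 2)⁻¹ with hsdef
  have hs : s₀ ≤ s := by
    have h1 : r ^ 2 ≤ (2 * s₀)⁻¹ := by
      calc r ^ 2 ≤ ((√(2 * s₀))⁻¹) ^ 2 := by gcongr
        _ = (2 * s₀)⁻¹ := by rw [inv_pow, Real.sq_sqrt (by positivity)]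
    rw [hsdef, le_inv_comm₀ hs₀ (by positivity)]
    calc 2 * r ^ 2 ≤ 2 * (2 * s₀)⁻¹ := by gcongr
      _ = s₀⁻¹ := by field_simp
  have hs0 : 0 < s := hs₀.trans_le hs
  have h1 : B s * s ^ (κ / 2) ≤ B s₀ * s₀ ^ (κ / 2) := hanti (Set.mem_Ici.2 le_rfl) hs hs
  have h2 : expNegInvGlue (1 / 2) * ν.real (closedBall x r) ≤ B s := by
    calc expNegInvGlue (1 / 2) * ν.real (closedBall x r)
        = ∫ y in closedBall x r, expNegInvGlue (1 / 2) ∂ν := by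
          rw [setIntegral_const, smul_eq_mul, mul_comm]
      _ ≤ ∫ y in closedBall x r, expNegInvGlue (1 - s * ‖y - x‖ ^ 2) ∂ν := by
          refine setIntegral_mono_on (integrable_const _) (integrable_prof ν x hs0.le).integrableOn
            measurableSet_closedBall fun y hy => expNegInvGlue.monotone ?_
          rw [mem_closedBall, dist_eq_norm] at hy
          have : s * ‖y - x‖ ^ 2 ≤ s * r ^ 2 := by gcongr
          have h3 : s * r ^ 2 = 1 / 2 := by rw [hsdef]; field_simp
          linarith
      _ ≤ B s := setIntegral_le_integral (integrable_prof ν x hs0.le)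
          (Eventually.of_forall fun y => expNegInvGlue.nonneg _)
  have h3 : s ^ (κ / 2) * (2 ^ (κ / 2) * r ^ κ) = 1 := by
    have : r ^ κ = (r ^ 2) ^ (κ / 2) := by
      rw [← Real.rpow_natCast, ← Real.rpow_mul hr.le]
      congr 1; push_cast; ring
    rw [this, ← Real.mul_rpow (by norm_num) (by positivity),
      ← Real.mul_rpow hs0.le (by positivity), hsdef, inv_mul_cancel₀ (by positivity),
      Real.one_rpow]
  have hpos : 0 < 2 ^ (κ / 2) * r ^ κ := by positivity
  rw [div_mul_eq_mul_div, le_div_iff₀ hψ]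
  calc ν.real (closedBall x r) * expNegInvGlue (1 / 2) ≤ B s := by rw [mul_comm]; exact h2
    _ = B s * s ^ (κ / 2) * (2 ^ (κ / 2) * r ^ κ) := by rw [mul_assoc, h3, mul_one]
    _ ≤ B s₀ * s₀ ^ (κ / 2) * (2 ^ (κ / 2) * r ^ κ) := by gcongr
    _ = _ := by ring

/-! ### The test fields -/

/-- A linear map `L` with `T* L` the orthogonal projection onto `(ker T)ᗮ`, where
`T ξ = ∑ ξᵢ Pᵢ e`. The two properties are the trace of that projection and the bound of its
quadratic form by `|v|²`. -/
lemma exists_symbol_inverse {d : ℕ} {E F : Type*} [NormedAddCommGroup E] [InnerProductSpace ℝ E]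
    [NormedAddCommGroup F] [InnerProductSpace ℝ F] [FiniteDimensional ℝ F]
    (P : Fin d → E →ₗ[ℝ] F) (e : E) :
    ∃ L : EuclideanSpace ℝ (Fin d) →L[ℝ] F,
      (∑ i, ⟪P i e, L (EuclideanSpace.single i 1)⟫ = (Module.finrank ℝ (kerSymb P e)ᗮ : ℝ)) ∧
      ∀ v : EuclideanSpace ℝ (Fin d), ∑ i, v i * ⟪P i e, L v⟫ ≤ ‖v‖ ^ 2 := by
  let T : EuclideanSpace ℝ (Fin d) →ₗ[ℝ] F :=
    ∑ i, (EuclideanSpace.proj i : EuclideanSpace ℝ (Fin d) →L[ℝ] ℝ).toLinearMap.smulRight (P i e)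
  have hT : ∀ v, T v = ∑ i, v i • P i e := fun v => by
    simp [T, LinearMap.sum_apply]
  have hker : LinearMap.ker T = kerSymb P e := by
    ext v
    rw [LinearMap.mem_ker, hT]
    rfl
  have hrange : LinearMap.range T.adjoint = (kerSymb P e)ᗮ := by
    rw [← hker, LinearMap.orthogonal_ker]
  let π : EuclideanSpace ℝ (Fin d) →ₗ[ℝ] EuclideanSpace ℝ (Fin d) :=
    ((kerSymb P e)ᗮ.starProjection).toLinearMap
  have hπ : ∀ v, π v ∈ LinearMap.range T.adjoint := fun v => by
    rw [hrange]
    exact Submodule.starProjection_apply_mem _ v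
  obtain ⟨L, hL⟩ := Module.projective_lifting_property T.adjoint.rangeRestrict
    (π.codRestrict _ hπ) T.adjoint.surjective_rangeRestrict
  have hL' : ∀ v, T.adjoint (L v) = (kerSymb P e)ᗮ.starProjection v := fun v =>
    congrArg Subtype.val (LinearMap.congr_fun hL v)
  have hTL : ∀ v w, ⟪T v, L w⟫ = ⟪v, (kerSymb P e)ᗮ.starProjection w⟫ := fun v w => by
    rw [← hL', LinearMap.adjoint_inner_right]
  refine ⟨L.toContinuousLinearMap, ?_, fun v => ?_⟩
  · have hproj : LinearMap.IsProj (kerSymb P e)ᗮ π :=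
      ⟨fun v => Submodule.starProjection_apply_mem _ v,
        fun v hv => Submodule.starProjection_eq_self_iff.2 hv⟩
    rw [← hproj.trace, LinearMap.trace_eq_sum_inner π (EuclideanSpace.basisFun (Fin d) ℝ)]
    refine Finset.sum_congr rfl fun i _ => ?_
    have := hTL (EuclideanSpace.single i 1) (EuclideanSpace.single i 1)
    rw [hT] at this
    simpa [π, EuclideanSpace.basisFun_apply, ite_smul] using this
  · have h1 : ∑ i, v i * ⟪P i e, L.toContinuousLinearMap v⟫ = ⟪T v, L v⟫ := by
      rw [hT, sum_inner]
      exact Finset.sum_congr rfl fun i _ => by rw [real_inner_smul_left]; rfl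
    rw [h1, hTL]
    calc ⟪v, (kerSymb P e)ᗮ.starProjection v⟫ ≤ ‖v‖ * ‖(kerSymb P e)ᗮ.starProjection v‖ :=
          real_inner_le_norm _ _
      _ ≤ ‖v‖ * ‖v‖ := by
          gcongr
          exact Submodule.norm_starProjection_apply_le _ v
      _ = ‖v‖ ^ 2 := by ring

/-- The test field `φ(y) = ψ(1 - s |y - x|²) L(y - x)`, supported in the ball of radius `s^{-1/2}`
around `x`. -/
noncomputable def testField {V F : Type*} [NormedAddCommGroup V] [InnerProductSpace ℝ V]
    [NormedAddCommGroup F] [NormedSpace ℝ F] (L : V →L[ℝ] F) (x : V) (s : ℝ) (y : V) : F :=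
  expNegInvGlue (1 - s * ‖y - x‖ ^ 2) • L (y - x)

section testField

variable {V F : Type*} [NormedAddCommGroup V] [InnerProductSpace ℝ V]
    [NormedAddCommGroup F] [NormedSpace ℝ F] (L : V →L[ℝ] F) (x : V)

lemma contDiff_testField (s : ℝ) : ContDiff ℝ (⊤ : ℕ∞) (testField L x s) := by
  have h1 : ContDiff ℝ (⊤ : ℕ∞) fun y : V => ‖y - x‖ ^ 2 :=
    (contDiff_id.sub contDiff_const).norm_sq ℝ
  have h2 : ContDiff ℝ (⊤ : ℕ∞) fun y : V => expNegInvGlue (1 - s * ‖y - x‖ ^ 2) :=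
    expNegInvGlue.contDiff.comp (contDiff_const.sub (contDiff_const.mul h1))
  exact h2.smul (L.contDiff.comp (contDiff_id.sub contDiff_const))

lemma fderiv_testField (s : ℝ) (y v : V) :
    fderiv ℝ (testField L x s) y v = expNegInvGlue (1 - s * ‖y - x‖ ^ 2) • L v
      - (2 * s * profDeriv (1 - s * ‖y - x‖ ^ 2) * ⟪y - x, v⟫) • L (y - x) := by
  have h1 : HasFDerivAt (fun y : V => y - x) (ContinuousLinearMap.id ℝ V) y :=
    (hasFDerivAt_id y).sub_const x
  have h2 := (h1.norm_sq.const_mul s).const_sub 1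
  have h3 := (hasDerivAt_prof (1 - s * ‖y - x‖ ^ 2)).comp_hasFDerivAt y h2
  have h4 := h3.smul (L.hasFDerivAt.comp y h1)
  have h5 : fderiv ℝ (testField L x s) y = _ := h4.fderiv
  rw [h5]
  simp
  rw [inner_sub_left]
  module

lemma testField_eq_zero {s : ℝ} {y : V} (h : 1 ≤ s * ‖y - x‖ ^ 2) : testField L x s y = 0 := by
  rw [testField, prof_eq_zero h, zero_smul]

lemma tsupport_testField {R s : ℝ} (hs0 : 0 < s) (hR : 0 < R) (hs : 1 ≤ s * R ^ 2) :
    tsupport (testField L x s) ⊆ closedBall x R := by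
  refine closure_minimal (fun y hy => ?_) isClosed_closedBall
  by_contra hcon
  rw [mem_closedBall, dist_eq_norm, not_le] at hcon
  exact hy (testField_eq_zero L x (hs.trans (by gcongr)))

lemma norm_testField_le {R s : ℝ} (hs0 : 0 < s) (hR : 0 < R) (hs : 1 ≤ s * R ^ 2) (y : V) :
    ‖testField L x s y‖ ≤ ‖L‖ * R * radWeight (s * ‖y - x‖ ^ 2) := by
  have hw := radWeight_nonneg (s * ‖y - x‖ ^ 2)
  rcases le_or_gt 1 (s * ‖y - x‖ ^ 2) with h | h
  · rw [testField_eq_zero L x h, norm_zero]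
    positivity
  · have hyR : ‖y - x‖ ≤ R := by
      by_contra hcon
      rw [not_le] at hcon
      have : s * R ^ 2 ≤ s * ‖y - x‖ ^ 2 := by gcongr
      linarith
    rw [testField, norm_smul, Real.norm_of_nonneg (expNegInvGlue.nonneg _)]
    calc expNegInvGlue (1 - s * ‖y - x‖ ^ 2) * ‖L (y - x)‖
        ≤ radWeight (s * ‖y - x‖ ^ 2) * (‖L‖ * R) := by
          gcongr
          · exact prof_le_radWeight (by positivity)
          · exact (L.le_opNorm _).trans (by gcongr)
      _ = _ := by ring

lemma norm_fderiv_testField_le {s : ℝ} (hs : 0 < s) (y v : V) :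
    ‖fderiv ℝ (testField L x s) y v‖ ≤ ‖L‖ * ‖v‖ * radWeight (s * ‖y - x‖ ^ 2) := by
  have hψ := expNegInvGlue.nonneg (1 - s * ‖y - x‖ ^ 2)
  have hq := profDeriv_nonneg (1 - s * ‖y - x‖ ^ 2)
  rw [fderiv_testField]
  calc _ ≤ ‖expNegInvGlue (1 - s * ‖y - x‖ ^ 2) • L v‖
        + ‖(2 * s * profDeriv (1 - s * ‖y - x‖ ^ 2) * ⟪y - x, v⟫) • L (y - x)‖ := norm_sub_le _ _
    _ ≤ expNegInvGlue (1 - s * ‖y - x‖ ^ 2) * (‖L‖ * ‖v‖)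
        + 2 * s * profDeriv (1 - s * ‖y - x‖ ^ 2) * (‖y - x‖ * ‖v‖) * (‖L‖ * ‖y - x‖) := by
        rw [norm_smul, norm_smul, Real.norm_of_nonneg hψ, norm_mul,
          Real.norm_of_nonneg (by positivity : 0 ≤ 2 * s * profDeriv (1 - s * ‖y - x‖ ^ 2))]
        gcongr
        · exact L.le_opNorm _
        · exact norm_inner_le_norm _ _
        · exact L.le_opNorm _
    _ = ‖L‖ * ‖v‖ * (expNegInvGlue (1 - s * ‖y - x‖ ^ 2)
        + 2 * (s * ‖y - x‖ ^ 2) * profDeriv (1 - s * ‖y - x‖ ^ 2)) := by ring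
    _ ≤ ‖L‖ * ‖v‖ * radWeight (s * ‖y - x‖ ^ 2) := by
        gcongr
        unfold radWeight
        linarith

end testField

lemma sum_inner_fderiv_testField_ge {d : ℕ} {E F : Type*} [NormedAddCommGroup E]
    [InnerProductSpace ℝ E] [NormedAddCommGroup F] [InnerProductSpace ℝ F]
    (P : Fin d → E →ₗ[ℝ] F) (e : E) (L : EuclideanSpace ℝ (Fin d) →L[ℝ] F) {m : ℝ}
    (hL1 : ∑ i, ⟪P i e, L (EuclideanSpace.single i 1)⟫ = m)
    (hL2 : ∀ v : EuclideanSpace ℝ (Fin d), ∑ i, v i * ⟪P i e, L v⟫ ≤ ‖v‖ ^ 2)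
    (x y : EuclideanSpace ℝ (Fin d)) {s : ℝ} (hs : 0 < s) :
    m * expNegInvGlue (1 - s * ‖y - x‖ ^ 2)
        - 2 * (s * ‖y - x‖ ^ 2) * profDeriv (1 - s * ‖y - x‖ ^ 2)
      ≤ ∑ i, ⟪P i e, fderiv ℝ (testField L x s) y (EuclideanSpace.single i 1)⟫ := by
  have hq := profDeriv_nonneg (1 - s * ‖y - x‖ ^ 2)
  have h1 : ∑ i, ⟪P i e, fderiv ℝ (testField L x s) y (EuclideanSpace.single i 1)⟫
      = expNegInvGlue (1 - s * ‖y - x‖ ^ 2) * m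
        - 2 * s * profDeriv (1 - s * ‖y - x‖ ^ 2) * ∑ i, (y - x) i * ⟪P i e, L (y - x)⟫ := by
    rw [← hL1, Finset.mul_sum, Finset.mul_sum, ← Finset.sum_sub_distrib]
    refine Finset.sum_congr rfl fun i _ => ?_
    rw [fderiv_testField, inner_sub_right, real_inner_smul_right, real_inner_smul_right,
      EuclideanSpace.inner_single_right]
    simp
    ring
  rw [h1]
  have h2 : 2 * s * profDeriv (1 - s * ‖y - x‖ ^ 2) * ∑ i, (y - x) i * ⟪P i e, L (y - x)⟫
      ≤ 2 * s * profDeriv (1 - s * ‖y - x‖ ^ 2) * ‖y - x‖ ^ 2 := by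
    gcongr
    exact hL2 _
  linarith

/-! ### The differential inequality and the density bound -/

/-- Lebesgue differentiation (through the Besicovitch covering theorem), in integrated form. -/
lemma ae_exists_oscillation_le {d : ℕ} {E : Type*} [NormedAddCommGroup E]
    {ν : Measure (EuclideanSpace ℝ (Fin d))} [IsFiniteMeasure ν]
    {g : EuclideanSpace ℝ (Fin d) → E} (hint : Integrable g ν) :
    ∀ᵐ x ∂ν, ∀ δ > 0, ∃ R₀ > 0, ∀ r, 0 ≤ r → r ≤ R₀ →
      ∫ y in closedBall x r, ‖g y - g x‖ ∂ν ≤ δ * ν.real (closedBall x r) := by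
  filter_upwards [(Besicovitch.vitaliFamily ν).ae_tendsto_average_norm_sub
    hint.locallyIntegrable] with x hx δ hδ
  have h1 := hx.comp (Besicovitch.tendsto_filterAt ν x)
  have h2 := h1.eventually (gt_mem_nhds hδ)
  rw [eventually_nhdsWithin_iff, Metric.eventually_nhds_iff] at h2
  obtain ⟨ε, hε, h3⟩ := h2
  refine ⟨ε / 2, by positivity, fun r hr hrε => ?_⟩
  rcases hr.eq_or_lt with rfl | hr
  · have : ∫ y in closedBall x 0, ‖g y - g x‖ ∂ν = 0 := by
      rw [closedBall_zero, integral_singleton]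
      simp
    rw [this]
    positivity
  · have h4 : ⨍ y in closedBall x r, ‖g y - g x‖ ∂ν < δ :=
      h3 (by rw [Real.dist_eq, sub_zero, abs_of_pos hr]; linarith) hr
    rw [setAverage_eq, smul_eq_mul] at h4
    rcases (measureReal_nonneg (μ := ν) (s := closedBall x r)).eq_or_lt with h5 | h5
    · have h6 : ν (closedBall x r) = 0 := (measureReal_eq_zero_iff).1 h5.symm
      rw [Measure.restrict_eq_zero.2 h6, integral_zero_measure, ← h5, mul_zero]
    · rw [inv_mul_lt_iff₀ h5] at h4
      linarith

section Density

variable {d : ℕ} {E F : Type*} [NormedAddCommGroup E] [InnerProductSpace ℝ E]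
  [FiniteDimensional ℝ E] [NormedAddCommGroup F] [InnerProductSpace ℝ F] [FiniteDimensional ℝ F]

/-- Testing the equation with `testField L x s`: up to the oscillation of `g` around `e` and the
zeroth order term, the first variation of `ν` in the direction of the test field vanishes. -/
lemma first_variation_le {Ω : Set (EuclideanSpace ℝ (Fin d))} {P₀ : E →ₗ[ℝ] F}
    {P : Fin d → E →ₗ[ℝ] F} {ν : Measure (EuclideanSpace ℝ (Fin d))} [IsFiniteMeasure ν]
    {g : EuclideanSpace ℝ (Fin d) → E} (hg : AEStronglyMeasurable g ν)
    (hpolar : ∀ᵐ x ∂ν, ‖g x‖ = 1) (hPDE : SolvesPDE Ω P₀ P ν g)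
    (e : E) (L : EuclideanSpace ℝ (Fin d) →L[ℝ] F) {m : ℝ}
    (hL1 : ∑ i, ⟪P i e, L (EuclideanSpace.single i 1)⟫ = m)
    (hL2 : ∀ v : EuclideanSpace ℝ (Fin d), ∑ i, v i * ⟪P i e, L v⟫ ≤ ‖v‖ ^ 2)
    {x : EuclideanSpace ℝ (Fin d)} {R s : ℝ} (hs0 : 0 < s) (hR : 0 < R) (hs : 1 ≤ s * R ^ 2)
    (hΩ : closedBall x R ⊆ Ω) :
    m * ∫ y, expNegInvGlue (1 - s * ‖y - x‖ ^ 2) ∂ν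
        - ∫ y, 2 * (s * ‖y - x‖ ^ 2) * profDeriv (1 - s * ‖y - x‖ ^ 2) ∂ν
      ≤ (∑ i, ‖(P i).toContinuousLinearMap‖) * ‖L‖
          * ∫ y, ‖g y - e‖ * radWeight (s * ‖y - x‖ ^ 2) ∂ν
        + ‖P₀.toContinuousLinearMap‖ * ‖L‖ * R * ∫ y, radWeight (s * ‖y - x‖ ^ 2) ∂ν := by
  set φ := testField L x s with hφ
  set w : EuclideanSpace ℝ (Fin d) → ℝ := fun y => radWeight (s * ‖y - x‖ ^ 2) with hw
  have hw0 : ∀ y, 0 ≤ w y := fun y => radWeight_nonneg _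
  have hwle : ∀ y, w y ≤ radWeight 0 := fun y => radWeight_le (by positivity)
  have hwcont : Continuous w := continuous_radWeight.comp (by fun_prop)
  have hwint : Integrable w ν := integrable_radWeight ν x hs0.le
  have hφs : ContDiff ℝ (⊤ : ℕ∞) φ := contDiff_testField L x s
  have hφt : tsupport φ ⊆ closedBall x R := tsupport_testField L x hs0 hR hs
  have hφc : HasCompactSupport φ :=
    (isCompact_closedBall x R).of_isClosed_subset (isClosed_tsupport φ) hφt
  have heq := hPDE φ hφs hφc (hφt.trans hΩ)
  have hDcont : Continuous (fderiv ℝ φ) := hφs.continuous_fderiv (by simp)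
  have hDbd : ∀ (i : Fin d) y, ‖fderiv ℝ φ y (EuclideanSpace.single i 1)‖ ≤ ‖L‖ * w y :=
    fun i y => by simpa using norm_fderiv_testField_le L x hs0 y (EuclideanSpace.single i 1)
  have hPbd : ∀ (i : Fin d) (h : E) y, |⟪P i h, fderiv ℝ φ y (EuclideanSpace.single i 1)⟫|
      ≤ ‖(P i).toContinuousLinearMap‖ * ‖h‖ * (‖L‖ * w y) := fun i h y =>
    (abs_real_inner_le_norm _ _).trans (mul_le_mul ((P i).toContinuousLinearMap.le_opNorm h)
      (hDbd i y) (norm_nonneg _) (by positivity))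
  have hint1 : ∀ i : Fin d,
      Integrable (fun y => ⟪P i (g y), fderiv ℝ φ y (EuclideanSpace.single i 1)⟫) ν := by
    intro i
    refine (hwint.const_mul (‖(P i).toContinuousLinearMap‖ * ‖L‖)).mono' ?_ ?_
    · refine AEStronglyMeasurable.inner
        ((P i).toContinuousLinearMap.continuous.comp_aestronglyMeasurable hg) ?_
      exact (hDcont.clm_apply continuous_const).aestronglyMeasurable
    · filter_upwards [hpolar] with y hy
      have := hPbd i (g y) y
      rw [hy] at this
      rw [Real.norm_eq_abs]
      linarith
  have hint2 : Integrable (fun y => ‖g y - e‖ * w y) ν := by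
    refine (hwint.const_mul (1 + ‖e‖)).mono'
      ((hg.sub aestronglyMeasurable_const).norm.mul hwcont.aestronglyMeasurable) ?_
    filter_upwards [hpolar] with y hy
    rw [norm_mul, norm_norm, Real.norm_of_nonneg (hw0 y)]
    have := norm_sub_le (g y) e
    rw [hy] at this
    exact mul_le_mul_of_nonneg_right this (hw0 y)
  have hzero : ∫ y, ⟪P₀ (g y), φ y⟫ ∂ν
      ≤ ‖P₀.toContinuousLinearMap‖ * ‖L‖ * R * ∫ y, w y ∂ν := by
    rw [← integral_const_mul]
    refine (le_abs_self _).trans ?_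
    rw [← Real.norm_eq_abs]
    refine norm_integral_le_of_norm_le (hwint.const_mul _) ?_
    filter_upwards [hpolar] with y hy
    have h1 := P₀.toContinuousLinearMap.le_opNorm (g y)
    rw [hy, mul_one] at h1
    have h2 := norm_testField_le L x hs0 hR hs y
    calc ‖⟪P₀ (g y), φ y⟫‖ ≤ ‖P₀ (g y)‖ * ‖φ y‖ := norm_inner_le_norm _ _
      _ ≤ ‖P₀.toContinuousLinearMap‖ * (‖L‖ * R * w y) :=
          mul_le_mul h1 h2 (norm_nonneg _) (norm_nonneg _)
      _ = _ := by ring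
  have hpt : ∀ y, m * expNegInvGlue (1 - s * ‖y - x‖ ^ 2)
        - 2 * (s * ‖y - x‖ ^ 2) * profDeriv (1 - s * ‖y - x‖ ^ 2)
      ≤ (∑ i, ⟪P i (g y), fderiv ℝ φ y (EuclideanSpace.single i 1)⟫)
        + (∑ i, ‖(P i).toContinuousLinearMap‖) * ‖L‖ * (‖g y - e‖ * w y) := by
    intro y
    refine (sum_inner_fderiv_testField_ge P e L hL1 hL2 x y hs0).trans ?_
    rw [← sub_le_iff_le_add', ← Finset.sum_sub_distrib, Finset.sum_mul, Finset.sum_mul]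
    refine Finset.sum_le_sum fun i _ => ?_
    rw [← inner_sub_left, ← map_sub]
    refine (le_abs_self _).trans ((hPbd i (e - g y) y).trans (le_of_eq ?_))
    rw [norm_sub_rev]
    ring
  have hmono := integral_mono
    (((integrable_prof ν x hs0.le).const_mul m).sub (integrable_profDeriv ν x hs0.le))
    ((integrable_finsetSum Finset.univ fun i _ => hint1 i).add
      (hint2.const_mul ((∑ i, ‖(P i).toContinuousLinearMap‖) * ‖L‖))) hpt
  simp only [Pi.sub_apply, Pi.add_apply] at hmono
  rw [integral_sub ((integrable_prof ν x hs0.le).const_mul m) (integrable_profDeriv ν x hs0.le),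
    integral_add (integrable_finsetSum Finset.univ fun i _ => hint1 i) (hint2.const_mul _),
    integral_finsetSum _ (fun i _ => hint1 i), integral_const_mul, integral_const_mul, heq]
    at hmono
  linarith

/-- The density bound. At a Lebesgue point `x` of `g`, `first_variation_le` with `e = g x` reads
`m B - Q ≤ δ (3 B + Q)`, where `B(s)` is the integral of the profile, `Q(s) = -2 s B'(s)` and
`m = dim (kerSymb P (g x))ᗮ > κ`; for `δ` small this is the hypothesis of `ball_decay`. -/
lemma ae_ball_decay {Ω : Set (EuclideanSpace ℝ (Fin d))} (hΩ : IsOpen Ω) {P₀ : E →ₗ[ℝ] F}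
    {P : Fin d → E →ₗ[ℝ] F} {ν : Measure (EuclideanSpace ℝ (Fin d))} [IsFiniteMeasure ν]
    {g : EuclideanSpace ℝ (Fin d) → E} (hg : AEStronglyMeasurable g ν)
    (hpolar : ∀ᵐ x ∂ν, ‖g x‖ = 1) (hPDE : SolvesPDE Ω P₀ P ν g)
    {κ : ℝ} (hκ0 : 0 ≤ κ) (hκ : κ < (ellP P : ℝ)) :
    ∀ᵐ x ∂ν, x ∈ Ω → ∃ C r₀ : ℝ, 0 < r₀ ∧
      ∀ r, 0 < r → r ≤ r₀ → ν.real (closedBall x r) ≤ C * r ^ κ := by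
  have hint : Integrable g ν := Integrable.of_bound hg 1 (hpolar.mono fun x hx => hx.le)
  filter_upwards [hpolar, ae_exists_oscillation_le hint] with x hx hosc hxΩ
  have he : g x ≠ 0 := by
    intro h
    rw [h, norm_zero] at hx
    exact zero_ne_one hx
  obtain ⟨L, hL1, hL2⟩ := exists_symbol_inverse P (g x)
  set m : ℝ := (Module.finrank ℝ (kerSymb P (g x))ᗮ : ℝ) with hm
  have hκm : κ < m := by
    refine hκ.trans_le ?_
    rw [hm]
    have hle : ellP P ≤ Module.finrank ℝ (kerSymb P (g x))ᗮ := Nat.sInf_le ⟨g x, he, rfl⟩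
    exact_mod_cast hle
  set C₁ := (∑ i, ‖(P i).toContinuousLinearMap‖) * ‖L‖ with hC₁
  set C₀ := ‖P₀.toContinuousLinearMap‖ * ‖L‖ with hC₀
  have hC₁0 : 0 ≤ C₁ := by positivity
  have hC₀0 : 0 ≤ C₀ := by positivity
  -- chosen so that `m - 3δ = κ (1 + δ)`
  set δ : ℝ := (m - κ) / (κ + 3) with hδdef
  have hδ : 0 < δ := div_pos (by linarith) (by linarith)
  have hδ' : δ * (κ + 3) = m - κ := by
    rw [hδdef]
    field_simp
  obtain ⟨R₀, hR₀, hR₀'⟩ := hosc (δ / (2 * (C₁ + 1))) (by positivity)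
  obtain ⟨R₁, hR₁, hR₁'⟩ := Metric.nhds_basis_closedBall.mem_iff.1 (hΩ.mem_nhds hxΩ)
  set R : ℝ := min (min R₀ R₁) (δ / (2 * (C₀ + 1))) with hRdef
  have hR : 0 < R := lt_min (lt_min hR₀ hR₁) (by positivity)
  have hRR₀ : R ≤ R₀ := (min_le_left _ _).trans (min_le_left _ _)
  have hRR₁ : R ≤ R₁ := (min_le_left _ _).trans (min_le_right _ _)
  have hRδ : R ≤ δ / (2 * (C₀ + 1)) := min_le_right _ _
  refine ball_decay ν x (κ := κ) (s₀ := (R ^ 2)⁻¹) (by positivity) fun s hs => ?_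
  have hs0 : 0 < s := lt_of_lt_of_le (by positivity) hs
  have hsR : 1 ≤ s * R ^ 2 := by
    rwa [inv_le_iff_one_le_mul₀ (by positivity)] at hs
  have h1 := first_variation_le hg hpolar hPDE (g x) L hL1 hL2 hs0 hR hsR
    ((closedBall_subset_closedBall hRR₁).trans hR₁')
  have h2 := integral_mul_radWeight_le (ν := ν) (x := x) hR hsR
    (by positivity : 0 ≤ δ / (2 * (C₁ + 1))) (h := fun y => ‖g y - g x‖)
    (fun y => norm_nonneg _) (hint.sub (integrable_const _)).norm
    (fun r hr hrR => hR₀' r hr (hrR.trans hRR₀))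
  have hW : ∫ y, radWeight (s * ‖y - x‖ ^ 2) ∂ν
      = 3 * ∫ y, expNegInvGlue (1 - s * ‖y - x‖ ^ 2) ∂ν
        + ∫ y, 2 * (s * ‖y - x‖ ^ 2) * profDeriv (1 - s * ‖y - x‖ ^ 2) ∂ν := by
    rw [← integral_const_mul, ← integral_add ((integrable_prof ν x hs0.le).const_mul 3)
      (integrable_profDeriv ν x hs0.le)]
    rfl
  have hW0 : 0 ≤ ∫ y, radWeight (s * ‖y - x‖ ^ 2) ∂ν :=
    integral_nonneg fun y => radWeight_nonneg _
  set W := ∫ y, radWeight (s * ‖y - x‖ ^ 2) ∂ν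
  set B := ∫ y, expNegInvGlue (1 - s * ‖y - x‖ ^ 2) ∂ν
  set Q := ∫ y, 2 * (s * ‖y - x‖ ^ 2) * profDeriv (1 - s * ‖y - x‖ ^ 2) ∂ν
  have h3 : C₁ * (δ / (2 * (C₁ + 1))) ≤ δ / 2 := by
    rw [← mul_div_assoc, div_le_div_iff₀ (by positivity) (by norm_num)]
    nlinarith
  have h4 : C₀ * R ≤ δ / 2 := by
    refine (mul_le_mul_of_nonneg_left hRδ hC₀0).trans ?_
    rw [← mul_div_assoc, div_le_div_iff₀ (by positivity) (by norm_num)]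
    nlinarith
  have h5 : m * B - Q ≤ δ * W := by
    calc m * B - Q ≤ _ := h1
      _ ≤ C₁ * (δ / (2 * (C₁ + 1)) * W) + C₀ * R * W := by gcongr
      _ = (C₁ * (δ / (2 * (C₁ + 1))) + C₀ * R) * W := by ring
      _ ≤ δ * W := by
          gcongr
          linarith
  have h6 : (1 + δ) * (κ * B) ≤ (1 + δ) * Q := by
    rw [hW] at h5
    have : m = κ + δ * (κ + 3) := by linarith
    rw [this] at h5
    linarith
  exact le_of_mul_le_mul_left h6 (by linarith)

end Density

/-! ### From ball measures to Hausdorff measures -/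

/-- The mass distribution principle, on a set where the density bound is uniform. -/
lemma restrict_le_hausdorffMeasure {X : Type*} [MetricSpace X] [MeasurableSpace X] [BorelSpace X]
    {ν : Measure X} [IsFiniteMeasure ν] {κ : ℝ} (hκ : 0 ≤ κ) {n : ℕ} (T : Set X)
    (hT : ∀ x ∈ T, ∀ r : ℝ, 0 < r → r ≤ 1 / (n + 1) →
      ν.real (closedBall x r) ≤ (n + 1) * r ^ κ) :
    (ENNReal.ofReal (n + 1))⁻¹ • ν.restrict T ≤ μH[κ] := by
  have hn : (0 : ℝ) < n + 1 := by positivity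
  refine Measure.le_hausdorffMeasure κ _ (ENNReal.ofReal (1 / (2 * (n + 1))))
    (by rw [ENNReal.ofReal_pos]; positivity) fun s hs => ?_
  rw [Measure.smul_apply, smul_eq_mul]
  refine ENNReal.inv_mul_le_iff (by rw [Ne, ENNReal.ofReal_eq_zero]; linarith)
    ENNReal.ofReal_ne_top |>.2 ?_
  refine (measure_mono subset_closure).trans ?_
  rw [Measure.restrict_apply isClosed_closure.measurableSet]
  rcases Set.eq_empty_or_nonempty (closure s ∩ T) with he | ⟨x, hxs, hxT⟩
  · simp [he]
  have hfin : ediam s ≠ ⊤ := ne_top_of_le_ne_top ENNReal.ofReal_ne_top hs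
  obtain ⟨ρ, hρ⟩ : ∃ ρ : ℝ, ρ = (ediam s).toReal := ⟨_, rfl⟩
  have hρ0 : 0 ≤ ρ := hρ ▸ ENNReal.toReal_nonneg
  have hρs : ediam s = ENNReal.ofReal ρ := by rw [hρ, ENNReal.ofReal_toReal hfin]
  have hρle : ρ ≤ 1 / (2 * (n + 1)) := by
    rw [hρs] at hs
    exact (ENNReal.ofReal_le_ofReal_iff (by positivity)).1 hs
  have hρlt : ρ < 1 / (n + 1) := by
    refine hρle.trans_lt (one_div_lt_one_div_of_lt hn (by linarith))
  have hsub : closure s ∩ T ⊆ closedBall x ρ := by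
    intro y hy
    have h1 : edist y x ≤ ediam (closure s) := edist_le_ediam_of_mem hy.1 hxs
    rw [ediam_closure, hρs, edist_dist] at h1
    exact (ENNReal.ofReal_le_ofReal_iff hρ0).1 h1
  -- radii slightly larger than `ρ` are used since `ρ` may vanish
  have hlim : ν.real (closedBall x ρ) ≤ (n + 1) * ρ ^ κ := by
    have ht : Tendsto (fun r : ℝ => ((n : ℝ) + 1) * r ^ κ) (𝓝[>] ρ) (𝓝 ((n + 1) * ρ ^ κ)) :=
      (((Real.continuous_rpow_const hκ).tendsto ρ).const_mul _).mono_left nhdsWithin_le_nhds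
    refine ge_of_tendsto ht ?_
    filter_upwards [Ioc_mem_nhdsGT hρlt] with r hr
    exact (measureReal_mono (closedBall_subset_closedBall hr.1.le)).trans
      (hT x hxT r (hρ0.trans_lt hr.1) hr.2)
  calc ν (closure s ∩ T) ≤ ν (closedBall x ρ) := measure_mono hsub
    _ = ENNReal.ofReal (ν.real (closedBall x ρ)) := (ofReal_measureReal (measure_ne_top _ _)).symm
    _ ≤ ENNReal.ofReal ((n + 1) * ρ ^ κ) := ENNReal.ofReal_le_ofReal hlim
    _ = ENNReal.ofReal (n + 1) * ediam s ^ κ := by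
        rw [ENNReal.ofReal_mul hn.le, hρs, ENNReal.ofReal_rpow_of_nonneg hρ0 hκ]

lemma null_of_ball_decay {X : Type*} [MetricSpace X] [MeasurableSpace X] [BorelSpace X]
    {ν : Measure X} [IsFiniteMeasure ν] {κ : ℝ} (hκ : 0 ≤ κ) {S : Set X} (hS : μH[κ] S = 0)
    (h : ∀ᵐ x ∂ν, x ∈ S → ∃ C r₀ : ℝ, 0 < r₀ ∧
      ∀ r, 0 < r → r ≤ r₀ → ν.real (closedBall x r) ≤ C * r ^ κ) :
    ν S = 0 := by
  let T : ℕ → Set X := fun n => {x | ∀ r : ℝ, 0 < r → r ≤ 1 / (n + 1) →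
    ν.real (closedBall x r) ≤ (n + 1) * r ^ κ}
  have hT : ∀ n, ν (S ∩ T n) = 0 := by
    intro n
    have h1 := restrict_le_hausdorffMeasure hκ (ν := ν) (n := n) (T n) (fun x hx => hx) S
    rw [hS, Measure.smul_apply, smul_eq_mul, nonpos_iff_eq_zero, mul_eq_zero,
      ENNReal.inv_eq_zero] at h1
    have h2 := h1.resolve_left ENNReal.ofReal_ne_top
    exact le_antisymm ((Measure.le_restrict_apply _ _).trans h2.le) zero_le
  rw [← nonpos_iff_eq_zero]
  calc ν S ≤ ν (⋃ n, S ∩ T n) := by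
        refine measure_mono_ae ?_
        filter_upwards [h] with x hx hxS
        obtain ⟨C, r₀, hr₀, hC⟩ := hx hxS
        obtain ⟨n, hn⟩ := exists_nat_gt (max C r₀⁻¹)
        refine Set.mem_iUnion.2 ⟨n, hxS, fun r hr hrn => ?_⟩
        have h1 : C ≤ n + 1 := ((le_max_left _ _).trans hn.le).trans (by linarith)
        have h2 : r₀⁻¹ ≤ n + 1 := ((le_max_right _ _).trans hn.le).trans (by linarith)
        refine (hC r hr (hrn.trans ?_)).trans (by gcongr)
        rw [one_div]
        exact inv_le_of_inv_le₀ hr₀ h2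
    _ = 0 := measure_iUnion_null hT

/-! ### Localization -/

lemma SolvesPDE.restrict {d : ℕ} {E F : Type*} [NormedAddCommGroup E] [InnerProductSpace ℝ E]
    [NormedAddCommGroup F] [InnerProductSpace ℝ F]
    {Ω U : Set (EuclideanSpace ℝ (Fin d))} {P₀ : E →ₗ[ℝ] F} {P : Fin d → E →ₗ[ℝ] F}
    {ν : Measure (EuclideanSpace ℝ (Fin d))} {g : EuclideanSpace ℝ (Fin d) → E}
    (h : SolvesPDE Ω P₀ P ν g) (hU : U ⊆ Ω) : SolvesPDE U P₀ P (ν.restrict U) g := by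
  intro φ hφ hφc hφU
  have h1 : ∀ y, y ∉ U → φ y = 0 := fun y hy => image_eq_zero_of_notMem_tsupport fun h => hy (hφU h)
  have h2 : ∀ y, y ∉ U → fderiv ℝ φ y = 0 := fun y hy =>
    image_eq_zero_of_notMem_tsupport fun h => hy (hφU (tsupport_fderiv_subset ℝ h))
  rw [setIntegral_eq_integral_of_forall_compl_eq_zero fun y hy => by rw [h1 y hy, inner_zero_right],
    ← h φ hφ hφc (hφU.trans hU)]
  refine Finset.sum_congr rfl fun i _ => ?_
  refine setIntegral_eq_integral_of_forall_compl_eq_zero fun y hy => ?_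
  rw [h2 y hy]
  simp

/-- **Hausdorff dimension lower bound for first-order PDE-constrained measures.**
If the `E`-valued Radon measure `μ = g|μ|` on the open set `Ω ⊆ ℝ^d` satisfies
`P(D)μ = ∑ᵢ Pᵢ ∂ᵢ μ + P₀ μ = 0` in the sense of distributions, then `|μ| ≪ ℋ^κ` for every
`0 ≤ κ < ℓ_P`; in particular `dim_ℋ |μ| ≥ ℓ_P`. -/
theorem hausdorff_dim_lower_bound_of_pde_constrained
    {d : ℕ} {E F : Type*} [NormedAddCommGroup E] [InnerProductSpace ℝ E] [FiniteDimensional ℝ E]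
    [NormedAddCommGroup F] [InnerProductSpace ℝ F] [FiniteDimensional ℝ F]
    (Ω : Set (EuclideanSpace ℝ (Fin d))) (hΩ : IsOpen Ω)
    (P₀ : E →ₗ[ℝ] F) (P : Fin d → E →ₗ[ℝ] F)
    -- `ν = |μ|` is a Radon measure on `Ω`:
    (ν : Measure (EuclideanSpace ℝ (Fin d)))
    (hloc : ∀ K : Set (EuclideanSpace ℝ (Fin d)), K ⊆ Ω → IsCompact K → ν K < ⊤)
    (hsupp : ν Ωᶜ = 0)
    -- `g` is the polar density of `μ`, of unit norm `|μ|`-a.e.: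
    (g : EuclideanSpace ℝ (Fin d) → E) (hg : AEStronglyMeasurable g ν) (hpolar : ∀ᵐ x ∂ν, ‖g x‖ = 1)
    (hPDE : SolvesPDE Ω P₀ P ν g) :
    ∀ κ : ℝ, 0 ≤ κ → κ < (ellP P : ℝ) → ν ≪ μH[κ] := by
  intro κ hκ0 hκ S hS
  have hSΩ : ν (S ∩ Ω) = 0 := by
    refine measure_null_of_locally_null _ fun x hx => ?_
    obtain ⟨R, hR, hRΩ⟩ := Metric.nhds_basis_closedBall.mem_iff.1 (hΩ.mem_nhds hx.2)
    refine ⟨(S ∩ Ω) ∩ ball x R, inter_mem self_mem_nhdsWithin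
      (mem_nhdsWithin_of_mem_nhds (ball_mem_nhds x hR)), ?_⟩
    have hfin : IsFiniteMeasure (ν.restrict (ball x R)) :=
      ⟨by
        rw [Measure.restrict_apply_univ]
        exact (measure_mono ball_subset_closedBall).trans_lt
          (hloc _ hRΩ (isCompact_closedBall x R))⟩
    have hdec := ae_ball_decay isOpen_ball hg.restrict (ae_restrict_of_ae hpolar)
      (hPDE.restrict (ball_subset_closedBall.trans hRΩ)) hκ0 hκ
    have hnull := null_of_ball_decay (ν := ν.restrict (ball x R)) (S := (S ∩ Ω) ∩ ball x R) hκ0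
      (measure_mono_null (Set.inter_subset_left.trans Set.inter_subset_left) hS)
      (hdec.mono fun y hy hyS => hy hyS.2)
    rwa [Measure.restrict_eq_self _ Set.inter_subset_right] at hnull
  refine measure_mono_null (fun x hx => ?_) (measure_union_null hSΩ hsupp)
  by_cases hxΩ : x ∈ Ω
  · exact Or.inl ⟨hx, hxΩ⟩
  · exact Or.inr hxΩ
end

section
/- Let E and F be finite-dimensional real inner product spaces and P_1, …, P_d : E → F linear maps, defining the homogeneous first-order operator P(D)μ = ∑_{i=1}^d P_i ∂_i μ with principal symbol P(ξ) = ∑_{i=1}^d ξ_i P_i. Let e ∈ E be a nonzero vector attaining the minimum in ℓ_P := min_{e' ≠ 0} dim({ξ : P(ξ)e' = 0}^⊥), and set W := {ξ ∈ ℝ^d : P(ξ)e = 0}^⊥, so dim W = ℓ_P. Then the E-valued measure μ := e · (H^{ℓ_P} restricted to W) satisfies P(D)μ = 0 in the sense of distributions on ℝ^d, i.e., for every smooth compactly supported φ : ℝ^d → F, ∑_{i=1}^d ∫_W ⟨P_i(e), ∂_i φ(x)⟩ dH^{ℓ_P}(x) = 0. Hence the lower bound dim_H(|μ|) ≥ ℓ_P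 is sharp. -/
/-! The derivative of a test function `φ` is integrable on `W`, so the claim is
`∑ᵢ ⟪Pᵢ e, L eᵢ⟫ = 0`, where `L = ∫_W Dφ` is a linear map `ℝ^d → F`.

* `ℋ^{dim W}` on `W` is an additive Haar measure, so the derivative of a compactly supported function
  along a direction of `W` integrates to zero over `W`: `L` vanishes on `W`
  (`setIntegral_fderiv_apply_eq_zero`).
* Hence the range of the adjoint of `L` lies in `Wᗮ`. Since `W = Nᗮ` with `N = {ξ | P(ξ)e = 0}`, this is
  `N`, so `P(Lᵀ y)e = 0` for all `y : F`. The sum is the trace of `y ↦ P(Lᵀ y)e`, so it vanishes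
  (`sum_inner_symbol_eq_zero`). -/

open MeasureTheory Metric Filter
open scoped ENNReal RealInnerProductSpace Topology

section

variable {d : ℕ} {E F : Type*} [NormedAddCommGroup E] [InnerProductSpace ℝ E]
    [NormedAddCommGroup F] [InnerProductSpace ℝ F] [FiniteDimensional ℝ F]

lemma setIntegral_hausdorff_eq {G : Type*} [NormedAddCommGroup G] [NormedSpace ℝ G]
    (W : Submodule ℝ (EuclideanSpace ℝ (Fin d))) (f : EuclideanSpace ℝ (Fin d) → G) :
    ∫ x in (W : Set (EuclideanSpace ℝ (Fin d))), f x ∂μH[(Module.finrank ℝ W : ℝ)]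
      = ∫ y : W, f y ∂μH[(Module.finrank ℝ W : ℝ)] := by
  have h := (isometry_subtype_coe (s := (W : Set (EuclideanSpace ℝ (Fin d))))).map_hausdorffMeasure
    (d := (Module.finrank ℝ W : ℝ)) (Or.inl (Nat.cast_nonneg _))
  rw [Subtype.range_coe] at h
  rw [← h]
  exact W.closed_of_finiteDimensional.isClosedEmbedding_subtypeVal.integral_map f

lemma integrableOn_hausdorff (W : Submodule ℝ (EuclideanSpace ℝ (Fin d)))
    {G : Type*} [NormedAddCommGroup G] [NormedSpace ℝ G]
    {f : EuclideanSpace ℝ (Fin d) → G} (hf : Continuous f) (hc : HasCompactSupport f) :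
    IntegrableOn f W μH[(Module.finrank ℝ W : ℝ)] := by
  have h := (isometry_subtype_coe (s := (W : Set (EuclideanSpace ℝ (Fin d))))).map_hausdorffMeasure
    (d := (Module.finrank ℝ W : ℝ)) (Or.inl (Nat.cast_nonneg _))
  have hW := W.closed_of_finiteDimensional.isClosedEmbedding_subtypeVal
  rw [Subtype.range_coe] at h
  rw [IntegrableOn, ← h]
  refine hW.measurableEmbedding.integrable_map_iff.2 ?_
  have : IsFiniteMeasureOnCompacts (μH[(Module.finrank ℝ W : ℝ)] : Measure W) := inferInstance
  exact (hf.comp continuous_subtype_val).integrable_of_hasCompactSupport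
    (hc.comp_isClosedEmbedding hW)

/-- The derivative along `w ∈ W` of a compactly supported `C¹` function has zero integral over `W`:
integration by parts against the constant `1`, for the Haar measure `ℋ^{dim W}` on `W`. -/
lemma setIntegral_fderiv_apply_eq_zero (W : Submodule ℝ (EuclideanSpace ℝ (Fin d)))
    {φ : EuclideanSpace ℝ (Fin d) → F} (hφ : ContDiff ℝ 1 φ) (hc : HasCompactSupport φ)
    {w : EuclideanSpace ℝ (Fin d)} (hw : w ∈ W) :
    ∫ x in (W : Set (EuclideanSpace ℝ (Fin d))), fderiv ℝ φ x w
      ∂μH[(Module.finrank ℝ W : ℝ)] = 0 := by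
  rw [setIntegral_hausdorff_eq]
  have hW := W.closed_of_finiteDimensional.isClosedEmbedding_subtypeVal
  set ψ : W → F := fun y => φ y with hψ
  have hψ' : ContDiff ℝ 1 ψ := hφ.comp W.subtypeL.contDiff
  have hψc : HasCompactSupport ψ := hc.comp_isClosedEmbedding hW
  have hder : ∀ y : W, fderiv ℝ φ y w = fderiv ℝ ψ y ⟨w, hw⟩ := fun y => by
    have h1 : HasFDerivAt ψ ((fderiv ℝ φ y).comp W.subtypeL) y :=
      ((hφ.differentiable one_ne_zero) (y : EuclideanSpace ℝ (Fin d))).hasFDerivAt.comp y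
        W.subtypeL.hasFDerivAt
    rw [h1.fderiv]
    rfl
  simp_rw [hder]
  have hint : Integrable (fun y => fderiv ℝ ψ y ⟨w, hw⟩) μH[(Module.finrank ℝ W : ℝ)] :=
    ((hψ'.continuous_fderiv one_ne_zero).clm_apply continuous_const).integrable_of_hasCompactSupport
      (hψc.fderiv_apply (𝕜 := ℝ) _)
  have hint' : Integrable ψ μH[(Module.finrank ℝ W : ℝ)] :=
    hψ'.continuous.integrable_of_hasCompactSupport hψc
  have := integral_smul_fderiv_eq_neg_fderiv_smul_of_integrable (𝕜 := ℝ) (f := fun _ : W => (1 : ℝ))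
    (g := ψ) (v := ⟨w, hw⟩) (μ := μH[(Module.finrank ℝ W : ℝ)]) (by simp) (by simpa using hint)
    (by simpa using hint') (fun x _ => differentiableAt_const _)
    (fun x _ => hψ'.differentiable one_ne_zero x)
  simpa using this

/-- A linear map vanishing on `{ξ | P(ξ)e = 0}ᗮ` is orthogonal to `ξ ↦ P(ξ)e` for the
Hilbert–Schmidt inner product. -/
lemma sum_inner_symbol_eq_zero (P : Fin d → E →ₗ[ℝ] F) (e : E)
    (L : EuclideanSpace ℝ (Fin d) →L[ℝ] F) (hL : ∀ w ∈ (kerSymb P e)ᗮ, L w = 0) :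
    ∑ i, ⟪P i e, L (EuclideanSpace.single i 1)⟫ = 0 := by
  have hadj : ∀ y : F, ∑ i, ⟪y, L (EuclideanSpace.single i 1)⟫ • P i e = 0 := fun y => by
    have hmem : L.adjoint y ∈ kerSymb P e := by
      rw [← (kerSymb P e).orthogonal_orthogonal, Submodule.mem_orthogonal]
      intro w hw
      rw [ContinuousLinearMap.adjoint_inner_right, hL w hw, inner_zero_left]
    have h : ∑ i, (L.adjoint y) i • P i e = 0 := hmem
    rw [← h]
    refine Finset.sum_congr rfl fun i _ => ?_
    rw [← ContinuousLinearMap.adjoint_inner_left, EuclideanSpace.inner_single_right]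
    simp
  -- Expand in an orthonormal basis `b` of `F`; the `k`-th contribution is `⟪P(Lᵀ bₖ)e, bₖ⟫`.
  let b := stdOrthonormalBasis ℝ F
  calc ∑ i, ⟪P i e, L (EuclideanSpace.single i 1)⟫
      = ∑ i, ∑ k, ⟪P i e, b k⟫ * ⟪b k, L (EuclideanSpace.single i 1)⟫ :=
        Finset.sum_congr rfl fun i _ => (b.sum_inner_mul_inner _ _).symm
    _ = ∑ k, ∑ i, ⟪P i e, b k⟫ * ⟪b k, L (EuclideanSpace.single i 1)⟫ := Finset.sum_comm
    _ = ∑ k, ⟪∑ i, ⟪b k, L (EuclideanSpace.single i 1)⟫ • P i e, b k⟫ := by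
        simp [sum_inner, real_inner_smul_left, mul_comm]
    _ = 0 := by simp [hadj]

end

/-- **Sharpness of the dimension bound.** If `e ≠ 0` attains the minimum in the definition of
`ℓ_P = min_{e' ≠ 0} dim {ξ : P(ξ)e' = 0}ᗮ`, and `W := {ξ : P(ξ)e = 0}ᗮ` (so `dim W = ℓ_P`), then
the `E`-valued measure `μ := e • (ℋ^{ℓ_P} ⌞ W)` solves the homogeneous equation `P(D)μ = 0` in
the sense of distributions on `ℝ^d`: for every smooth compactly supported `φ : ℝ^d → F`,
`∑ᵢ ∫_W ⟪Pᵢ e, ∂ᵢ φ⟫ dℋ^{ℓ_P} = 0`. Hence the lower bound `dim_ℋ |μ| ≥ ℓ_P` is sharp. -/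
theorem pde_solution_on_orthogonal_complement_is_sharp
    {d : ℕ} {E F : Type*} [NormedAddCommGroup E] [InnerProductSpace ℝ E] [FiniteDimensional ℝ E]
    [NormedAddCommGroup F] [InnerProductSpace ℝ F] [FiniteDimensional ℝ F]
    (P : Fin d → E →ₗ[ℝ] F) (e : E) (he : e ≠ 0)
    (hmin : ∀ e' : E, e' ≠ 0 →
      Module.finrank ℝ ((kerSymb P e)ᗮ) ≤ Module.finrank ℝ ((kerSymb P e')ᗮ)) :
    ∀ φ : EuclideanSpace ℝ (Fin d) → F, ContDiff ℝ (⊤ : ℕ∞) φ → HasCompactSupport φ →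
      (∑ i : Fin d, ∫ x in ((kerSymb P e)ᗮ : Set (EuclideanSpace ℝ (Fin d))),
          ⟪P i e, fderiv ℝ φ x (EuclideanSpace.single i 1)⟫
            ∂(μH[(Module.finrank ℝ ((kerSymb P e)ᗮ) : ℝ)])) = 0 := by
  intro φ hφ hc
  have hφ1 : ContDiff ℝ 1 φ := hφ.of_le (by exact_mod_cast le_top)
  set W := (kerSymb P e)ᗮ
  have hD : Integrable (fderiv ℝ φ)
      ((μH[(Module.finrank ℝ W : ℝ)]).restrict (W : Set (EuclideanSpace ℝ (Fin d)))) :=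
    integrableOn_hausdorff W (hφ1.continuous_fderiv one_ne_zero) (hc.fderiv (𝕜 := ℝ))
  have hL := sum_inner_symbol_eq_zero P e
    (∫ x in (W : Set (EuclideanSpace ℝ (Fin d))), fderiv ℝ φ x ∂μH[(Module.finrank ℝ W : ℝ)])
    (fun w hw => by
      rw [ContinuousLinearMap.integral_apply hD]
      exact setIntegral_fderiv_apply_eq_zero W hφ1 hc hw)
  rw [← hL]
  refine Finset.sum_congr rfl fun i _ => ?_
  rw [ContinuousLinearMap.integral_apply hD]
  exact integral_inner (hD.apply_continuousLinearMap _) _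
end
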